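/- arXiv:math/0407355 — 5 statements merged into one kernel-verified Lean document; each statement's English description precedes it below -/
import Mathlib

section
/- Let V be a real inner product space with dim V = n ≥ 2, let p ∈ V be nonzero, set t = ‖p‖²/2, and let a₁, b₁, a₂, b₂ ∈ ℝ. Define the linear map J : V × V → V × V by J(X, P) = (−(a₂·P + b₂·⟨p,P⟩·p), a₁·X + b₁·⟨p,X⟩·p). Then J ∘ J = −id on V × V if and only if a₁·a₂ = 1 and (a₁ + 2t·b₁)·(a₂ + 2t·b₂) = 1. -/
open RealInnerProductSpace

/-!
The square of `J` is diagonal: `J (J (X, P)) = -(T X, T P)` with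
`T X = a₁ a₂ X + c ⟪p, X⟫ p` and `c = a₁ b₂ + a₂ b₁ + 2 t b₁ b₂`. The line spanned by `p` and its
orthogonal complement are eigenspaces of `T`, with eigenvalues
`a₁ a₂ + 2 t c = (a₁ + 2 t b₁) (a₂ + 2 t b₂)` and `a₁ a₂`. Since `dim V ≥ 2` the complement is
nonzero, so `T = id` exactly when both eigenvalues equal `1`.
-/

theorem exists_ne_zero_inner_eq_zero {V : Type*} [NormedAddCommGroup V] [InnerProductSpace ℝ V]
    (h : 2 ≤ Module.finrank ℝ V) (p : V) (hp : p ≠ 0) : ∃ q : V, q ≠ 0 ∧ ⟪p, q⟫ = 0 := by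
  by_contra! H
  -- otherwise every vector equals its projection to the line spanned by `p`
  have h1 : Module.finrank ℝ V ≤ 1 := by
    refine finrank_le_one p fun v => ⟨⟪p, v⟫ / ‖p‖ ^ 2, ?_⟩
    by_contra hv
    refine H (v - (⟪p, v⟫ / ‖p‖ ^ 2) • p) (sub_ne_zero.mpr (Ne.symm hv)) ?_
    have hn : ‖p‖ ≠ 0 := norm_ne_zero_iff.mpr hp
    rw [inner_sub_right, inner_smul_right, real_inner_self_eq_norm_sq]
    field_simp
    ring
  omega

/-- Proposition 2 (pointwise): the natural almost complex structure of diagonal type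
`J(X,P) = (−(a₂P + b₂⟪p,P⟫p), a₁X + b₁⟪p,X⟫p)` satisfies `J ∘ J = −id` on `V × V`
iff `a₁a₂ = 1` and `(a₁ + 2tb₁)(a₂ + 2tb₂) = 1`, where `t = ‖p‖²/2`. -/
theorem prop2_pointwise {V : Type*} [NormedAddCommGroup V] [InnerProductSpace ℝ V]
    (n : ℕ) (hn : 2 ≤ n) (hdim : Module.finrank ℝ V = n)
    (p : V) (hp : p ≠ 0) (t : ℝ) (ht : t = ‖p‖ ^ 2 / 2)
    (a₁ b₁ a₂ b₂ : ℝ) (J : V × V → V × V)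
    (hJ : ∀ X P : V,
      J (X, P) = (-(a₂ • P + (b₂ * ⟪p, P⟫) • p), a₁ • X + (b₁ * ⟪p, X⟫) • p)) :
    (∀ z : V × V, J (J z) = -z) ↔
      (a₁ * a₂ = 1 ∧ (a₁ + 2 * t * b₁) * (a₂ + 2 * t * b₂) = 1) := by
  have hpp : ⟪p, p⟫ = 2 * t := by rw [real_inner_self_eq_norm_sq, ht]; ring
  have hJJ : ∀ X P : V, J (J (X, P)) =
      (-((a₁ * a₂) • X + ((a₁ * b₂ + a₂ * b₁ + 2 * t * b₁ * b₂) * ⟪p, X⟫) • p),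
       -((a₁ * a₂) • P + ((a₁ * b₂ + a₂ * b₁ + 2 * t * b₁ * b₂) * ⟪p, P⟫) • p)) := by
    intro X P
    rw [hJ, hJ]
    simp only [inner_add_right, inner_neg_right, inner_smul_right, hpp]
    ext <;> dsimp only <;> module
  constructor
  · intro h
    have hT : ∀ X : V,
        (a₁ * a₂) • X + ((a₁ * b₂ + a₂ * b₁ + 2 * t * b₁ * b₂) * ⟪p, X⟫) • p = X := by
      intro X
      have h1 := congrArg Prod.fst (h (X, 0))
      rw [hJJ] at h1
      exact neg_injective h1
    constructor
    · obtain ⟨q, hq, hpq⟩ := exists_ne_zero_inner_eq_zero (hdim ▸ hn) p hp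
      have h1 := hT q
      rw [hpq, mul_zero, zero_smul, add_zero] at h1
      exact smul_left_injective ℝ hq (h1.trans (one_smul ℝ q).symm)
    · have h1 := hT p
      rw [hpp, ← add_smul] at h1
      have h2 := smul_left_injective ℝ hp (h1.trans (one_smul ℝ p).symm)
      linear_combination h2
  · rintro ⟨h1, h2⟩ ⟨X, P⟩
    have ht0 : 2 * t ≠ 0 := by
      rw [← hpp]
      exact inner_self_ne_zero.mpr hp
    have hc : a₁ * b₂ + a₂ * b₁ + 2 * t * b₁ * b₂ = 0 :=
      mul_left_cancel₀ ht0 (by linear_combination h2 - h1)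
    rw [hJJ, hc, h1]
    simp
end

section
/- Let V be a real inner product space with dim V = n ≥ 2, let A, c, t, λ, λ₁ be real numbers with A > 0, t > 0, λ > 0, 2c − A²·t·λ² > 0 and λ + 2t·λ₁ > 0, and let p ∈ V with ‖p‖² = 2t. Define a₁ = A·t·λ, b₁ = (c − A²·t·λ·(λ + t·λ₁))/(A·t·(λ + 2t·λ₁)), a₂ = 1/(A·t·λ), b₂ = −(c − A²·t·λ·(λ + t·λ₁))/(A·t²·λ·(2c − A²·t·λ²)), and the linear map J : V × V → V × V by J(X,P) = (−(a₂·P + b₂·⟨p,P⟩·p), a₁·X + b₁·⟨p,X⟩·p). Then J ∘ J = −id on V × V. -/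
/-!
Writing `T a b = a • id + b • ⟪p, ·⟫ p`, the map is `J (X, P) = (-T a₂ b₂ P, T a₁ b₁ X)`, so
`J ∘ J = -id` says that `T a₁ b₁` and `T a₂ b₂` are mutually inverse. Since `⟪p, p⟫ = 2t`, this
reduces to the scalar identities `a₁ a₂ = 1` and `a₁ b₂ + a₂ b₁ + 2t b₁ b₂ = 0`. The second one holds
because `a₁ + 2t b₁ = (2c - A²tλ²) / (A (λ + 2tλ₁))` for the given parameters.
-/

open RealInnerProductSpace

/-- The natural complex structures of formula (13) are almost complex structures:
with the explicit parameters `a₁, b₁, a₂, b₂` of Theorem 4, `J ∘ J = −id` on `V × V`. -/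
theorem formula13_almost_complex {V : Type*} [NormedAddCommGroup V] [InnerProductSpace ℝ V]
    (n : ℕ) (hn : 2 ≤ n) (hdim : Module.finrank ℝ V = n)
    (A c t lam lam₁ : ℝ) (hA : 0 < A) (ht : 0 < t) (hlam : 0 < lam)
    (hc : 0 < 2 * c - A ^ 2 * t * lam ^ 2) (hden : 0 < lam + 2 * t * lam₁)
    (p : V) (hp : ‖p‖ ^ 2 = 2 * t)
    (a₁ b₁ a₂ b₂ : ℝ)
    (ha₁ : a₁ = A * t * lam)
    (hb₁ : b₁ = (c - A ^ 2 * t * lam * (lam + t * lam₁)) / (A * t * (lam + 2 * t * lam₁)))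
    (ha₂ : a₂ = 1 / (A * t * lam))
    (hb₂ : b₂ = -(c - A ^ 2 * t * lam * (lam + t * lam₁)) /
      (A * t ^ 2 * lam * (2 * c - A ^ 2 * t * lam ^ 2)))
    (J : V × V → V × V)
    (hJ : ∀ X P : V,
      J (X, P) = (-(a₂ • P + (b₂ * ⟪p, P⟫) • p), a₁ • X + (b₁ * ⟪p, X⟫) • p)) :
    ∀ z : V × V, J (J z) = -z := by
  have h1 : a₁ * a₂ = 1 := by
    rw [ha₁, ha₂]; field_simp
  have h2 : a₁ * b₂ + a₂ * b₁ + 2 * t * b₁ * b₂ = 0 := by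
    have hsum : a₁ + 2 * t * b₁
        = (2 * c - A ^ 2 * t * lam ^ 2) / (A * (lam + 2 * t * lam₁)) := by
      -- `field_simp` normalizes the denominator to this form before looking for `≠ 0`.
      have hE : lam + t * 2 * lam₁ ≠ 0 := by
        rw [mul_comm t 2]; exact hden.ne'
      rw [ha₁, hb₁]; field_simp; ring
    have hprod : b₂ * (a₁ + 2 * t * b₁) = -(a₂ * b₁) := by
      rw [hsum, hb₂, hb₁, ha₂]
      generalize c - A ^ 2 * t * lam * (lam + t * lam₁) = N
      -- Opaque names for the two positive factors let them cancel as units.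
      generalize 2 * c - A ^ 2 * t * lam ^ 2 = D at hc ⊢
      generalize lam + 2 * t * lam₁ = E at hden ⊢
      field_simp
    linear_combination hprod
  have hpp : ⟪p, p⟫ = 2 * t := by rw [real_inner_self_eq_norm_sq, hp]
  rintro ⟨X, P⟩
  rw [hJ, hJ]
  simp only [inner_add_right, inner_neg_right, inner_smul_right, hpp, Prod.neg_mk]
  ext
  · match_scalars
    · linear_combination -h1
    · linear_combination -⟪p, X⟫ * h2
  · match_scalars
    · linear_combination -h1
    · linear_combination -⟪p, P⟫ * h2
end

section
/- Let V be a real inner product space, let p ∈ V, set t = ‖p‖²/2, and let a₁, b₁, a₂, b₂, λ, μ ∈ ℝ with a₁·a₂ = 1 and (a₁ + 2t·b₁)·(a₂ + 2t·b₂) = 1. Define c₁ = λ·a₁, c₂ = λ·a₂, and d₁, d₂ by c₁ + 2t·d₁ = (λ + 2t·μ)·(a₁ + 2t·b₁) and c₂ + 2t·d₂ = (λ + 2t·μ)·(a₂ + 2t·b₂) (assuming t > 0 so d₁, d₂ are determined). Define J : V × V → V × V by J(X,P) = (−(a₂·P + b₂·⟨p,P⟩·p), a₁·X + b₁·⟨p,X⟩·p)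 and G((X₁,P₁),(X₂,P₂)) = c₁·⟨X₁,X₂⟩ + d₁·⟨p,X₁⟩·⟨p,X₂⟩ + c₂·⟨P₁,P₂⟩ + d₂·⟨p,P₁⟩·⟨p,P₂⟩. Then the 2-form φ(x,y) = G(x, Jy) satisfies φ((X₁,P₁),(X₂,P₂)) = λ·(⟨P₁,X₂⟩ − ⟨X₁,P₂⟩) + μ·(⟨p,P₁⟩·⟨p,X₂⟩ − ⟨p,X₁⟩·⟨p,P₂⟩) for all (X₁,P₁), (X₂,P₂) ∈ V × V. -/
open RealInnerProductSpace

/-- Proposition 6 (pointwise): the fundamental 2-form `φ(x,y) = G(x, Jy)` of the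
Hermitian structure `(G,J)` is given by
`φ((X₁,P₁),(X₂,P₂)) = λ(⟪P₁,X₂⟫ − ⟪X₁,P₂⟫) + μ(⟪p,P₁⟫⟪p,X₂⟫ − ⟪p,X₁⟫⟪p,P₂⟫)`. -/
theorem prop6_fundamental_two_form {V : Type*} [NormedAddCommGroup V]
    [InnerProductSpace ℝ V]
    (p : V) (t : ℝ) (ht : t = ‖p‖ ^ 2 / 2) (htpos : 0 < t)
    (a₁ b₁ a₂ b₂ lam μ c₁ d₁ c₂ d₂ : ℝ)
    (h1 : a₁ * a₂ = 1) (h2 : (a₁ + 2 * t * b₁) * (a₂ + 2 * t * b₂) = 1)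
    (hc₁ : c₁ = lam * a₁) (hc₂ : c₂ = lam * a₂)
    (hd₁ : c₁ + 2 * t * d₁ = (lam + 2 * t * μ) * (a₁ + 2 * t * b₁))
    (hd₂ : c₂ + 2 * t * d₂ = (lam + 2 * t * μ) * (a₂ + 2 * t * b₂))
    (J : V × V → V × V)
    (hJ : ∀ X P : V,
      J (X, P) = (-(a₂ • P + (b₂ * ⟪p, P⟫) • p), a₁ • X + (b₁ * ⟪p, X⟫) • p))
    (G : V × V → V × V → ℝ)
    (hG : ∀ X₁ P₁ X₂ P₂ : V, G (X₁, P₁) (X₂, P₂) =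
      c₁ * ⟪X₁, X₂⟫ + d₁ * ⟪p, X₁⟫ * ⟪p, X₂⟫ +
      c₂ * ⟪P₁, P₂⟫ + d₂ * ⟪p, P₁⟫ * ⟪p, P₂⟫)
    (φ : V × V → V × V → ℝ)
    (hφ : ∀ x y : V × V, φ x y = G x (J y)) :
    ∀ X₁ P₁ X₂ P₂ : V, φ (X₁, P₁) (X₂, P₂) =
      lam * (⟪P₁, X₂⟫ - ⟪X₁, P₂⟫) +
      μ * (⟪p, P₁⟫ * ⟪p, X₂⟫ - ⟪p, X₁⟫ * ⟪p, P₂⟫) := by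
  intro X₁ P₁ X₂ P₂
  have hpp : ⟪p, p⟫ = 2 * t := by
    rw [real_inner_self_eq_norm_sq, ht]; ring
  have ht0 : 2 * t ≠ 0 := by positivity
  -- The coefficients of the two `⟪p, ·⟫ * ⟪p, ·⟫` terms; after multiplying by `2 * t ≠ 0`,
  -- the proportionality relations and the almost complex conditions give both values.
  have e₁ : c₁ * b₂ + d₁ * (a₂ + 2 * t * b₂) = μ := by
    apply mul_left_cancel₀ ht0
    linear_combination (a₂ + 2 * t * b₂) * hd₁ + (lam + 2 * t * μ) * h2 - a₂ * hc₁ - lam * h1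
  have e₂ : c₂ * b₁ + d₂ * (a₁ + 2 * t * b₁) = μ := by
    apply mul_left_cancel₀ ht0
    linear_combination (a₁ + 2 * t * b₁) * hd₂ + (lam + 2 * t * μ) * h2 - a₁ * hc₂ - lam * h1
  have f₁ : c₁ * a₂ = lam := by linear_combination a₂ * hc₁ + lam * h1
  have f₂ : c₂ * a₁ = lam := by linear_combination a₁ * hc₂ + lam * h1
  rw [hφ, hJ, hG]
  simp only [inner_neg_right, inner_add_right, real_inner_smul_right, hpp,
    real_inner_comm p X₁, real_inner_comm p P₁]
  linear_combination f₂ * ⟪P₁, X₂⟫ - f₁ * ⟪X₁, P₂⟫ +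
    e₂ * (⟪p, P₁⟫ * ⟪p, X₂⟫) - e₁ * (⟪p, X₁⟫ * ⟪p, P₂⟫)
end

section
/- Let V be a real inner product space with dim V = n ≥ 2, let A, c, t, λ, λ₁ be real numbers with A > 0, t > 0, λ > 0, 2c − A²·t·λ² > 0 and λ + 2t·λ₁ > 0, and let p ∈ V with ‖p‖² = 2t. Define J : V × V → V × V by J(X,P) = (−(a₂·P + b₂·⟨p,P⟩·p), a₁·X + b₁·⟨p,X⟩·p) with a₁ = A·t·λ, b₁ = (c − A²·t·λ·(λ + t·λ₁))/(A·t·(λ + 2t·λ₁)), a₂ = 1/(A·t·λ), b₂ = −(c − A²·t·λ·(λ + t·λ₁))/(A·t²·λ·(2c − A²·t·λ²)), and define the bilinear form G on V × V by G((X₁,P₁),(X₂,P₂)) = c₁·⟨X₁,X₂⟩ + d₁·⟨p,X₁⟩·⟨p,X₂⟩ + c₂·⟨P₁,P₂⟩ + d₂·⟨p,P₁⟩·⟨p,P₂⟩ with c₁ = A·t·λ², d₁ = (c − A²·t·λ²)/(A·t), c₂ = 1/(A·t), d₂ = −(c − A²·t·(λ² + 2t·λ₁·(λ + t·λ₁)))/(A·t²·(2c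 − A²·t·λ²)). Then G(Jx, Jy) = G(x, y) for all x, y ∈ V × V. -/
open RealInnerProductSpace

/-!
On each factor, both `J` and `G` split along the line `ℝ p` and its orthogonal complement, so
`G` is `J`-invariant as soon as the eigenvalues match. Off the line this reads `c₂ a₁² = c₁` and
`c₁ a₂² = c₂`. On the line, where `⟪p, p⟫ = 2t`, put `E = 2c - A²tλ²` and `D = λ + 2tλ₁`; then
`a₁ + 2t b₁ = E / (A D)`, `a₂ + 2t b₂ = A D / E`, `c₁ + 2t d₁ = E / A`, `c₂ + 2t d₂ = A D² / E`,
and the invariance follows at once.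
-/

/-- A form `k ⟪·,·⟫ + d ⟪p,·⟫⟪p,·⟫` is pulled back by `X ↦ a X + b ⟪p,X⟫ p` to
`k' ⟪·,·⟫ + d' ⟪p,·⟫⟪p,·⟫` when the coefficients match on `p^⊥` (hypothesis `h`) and
on `ℝ p` (hypothesis `hline`). -/
lemma pullback_form {V : Type*} [NormedAddCommGroup V] [InnerProductSpace ℝ V]
    {t a b k d k' d' : ℝ} (ht : t ≠ 0) {p : V} (hp : ‖p‖ ^ 2 = 2 * t)
    (h : k * a ^ 2 = k')
    (hline : (k + 2 * t * d) * (a + 2 * t * b) ^ 2 = k' + 2 * t * d') (X Y : V) :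
    k * ⟪a • X + (b * ⟪p, X⟫) • p, a • Y + (b * ⟪p, Y⟫) • p⟫ +
        d * ⟪p, a • X + (b * ⟪p, X⟫) • p⟫ * ⟪p, a • Y + (b * ⟪p, Y⟫) • p⟫ =
      k' * ⟪X, Y⟫ + d' * ⟪p, X⟫ * ⟪p, Y⟫ := by
  have hpp : ⟪p, p⟫ = 2 * t := by rw [real_inner_self_eq_norm_sq, hp]
  -- the coefficient of `⟪p, X⟫ ⟪p, Y⟫` in the pulled-back form
  have hd : k * (2 * a * b + 2 * t * b ^ 2) + d * (a + 2 * t * b) ^ 2 = d' := by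
    have h2 : 2 * t ≠ 0 := mul_ne_zero two_ne_zero ht
    apply mul_left_cancel₀ h2
    linear_combination hline - h
  simp only [inner_add_left, inner_add_right, real_inner_smul_left, real_inner_smul_right, hpp,
    real_inner_comm p X]
  linear_combination ⟪X, Y⟫ * h + ⟪p, X⟫ * ⟪p, Y⟫ * hd

/-- Pointwise Hermitian property of the pair `(G,J)` of Theorem 9: the Kähler metric `G`
of formula (24) is Hermitian with respect to the complex structure `J` of formula (13). -/
theorem theorem9_hermitian {V : Type*} [NormedAddCommGroup V] [InnerProductSpace ℝ V]
    (n : ℕ) (hn : 2 ≤ n) (hdim : Module.finrank ℝ V = n)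
    (A c t lam lam₁ : ℝ) (hA : 0 < A) (ht : 0 < t) (hlam : 0 < lam)
    (hc : 0 < 2 * c - A ^ 2 * t * lam ^ 2) (hden : 0 < lam + 2 * t * lam₁)
    (p : V) (hp : ‖p‖ ^ 2 = 2 * t)
    (a₁ b₁ a₂ b₂ c₁ d₁ c₂ d₂ : ℝ)
    (ha₁ : a₁ = A * t * lam)
    (hb₁ : b₁ = (c - A ^ 2 * t * lam * (lam + t * lam₁)) / (A * t * (lam + 2 * t * lam₁)))
    (ha₂ : a₂ = 1 / (A * t * lam))
    (hb₂ : b₂ = -(c - A ^ 2 * t * lam * (lam + t * lam₁)) /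
      (A * t ^ 2 * lam * (2 * c - A ^ 2 * t * lam ^ 2)))
    (hc₁ : c₁ = A * t * lam ^ 2)
    (hd₁ : d₁ = (c - A ^ 2 * t * lam ^ 2) / (A * t))
    (hc₂ : c₂ = 1 / (A * t))
    (hd₂ : d₂ = -(c - A ^ 2 * t * (lam ^ 2 + 2 * t * lam₁ * (lam + t * lam₁))) /
      (A * t ^ 2 * (2 * c - A ^ 2 * t * lam ^ 2)))
    (J : V × V → V × V)
    (hJ : ∀ X P : V,
      J (X, P) = (-(a₂ • P + (b₂ * ⟪p, P⟫) • p), a₁ • X + (b₁ * ⟪p, X⟫) • p))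
    (G : V × V → V × V → ℝ)
    (hG : ∀ X₁ P₁ X₂ P₂ : V, G (X₁, P₁) (X₂, P₂) =
      c₁ * ⟪X₁, X₂⟫ + d₁ * ⟪p, X₁⟫ * ⟪p, X₂⟫ +
      c₂ * ⟪P₁, P₂⟫ + d₂ * ⟪p, P₁⟫ * ⟪p, P₂⟫) :
    ∀ x y : V × V, G (J x) (J y) = G x y := by
  have hE : 2 * c - A ^ 2 * t * lam ^ 2 ≠ 0 := hc.ne'
  have hD : lam + 2 * t * lam₁ ≠ 0 := hden.ne'
  have hα₁ : a₁ + 2 * t * b₁ =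
      (2 * c - A ^ 2 * t * lam ^ 2) / (A * (lam + 2 * t * lam₁)) := by
    rw [ha₁, hb₁]
    generalize hDef : lam + 2 * t * lam₁ = D at hD ⊢
    field_simp
    rw [← hDef]
    ring
  have hα₂ : a₂ + 2 * t * b₂ =
      A * (lam + 2 * t * lam₁) / (2 * c - A ^ 2 * t * lam ^ 2) := by
    rw [ha₂, hb₂]; field_simp; ring
  have hγ₁ : c₁ + 2 * t * d₁ = (2 * c - A ^ 2 * t * lam ^ 2) / A := by
    rw [hc₁, hd₁]; field_simp; ring
  have hγ₂ : c₂ + 2 * t * d₂ =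
      A * (lam + 2 * t * lam₁) ^ 2 / (2 * c - A ^ 2 * t * lam ^ 2) := by
    rw [hc₂, hd₂]; field_simp; ring
  rintro ⟨X₁, P₁⟩ ⟨X₂, P₂⟩
  have hX := pullback_form (k := c₂) (d := d₂) (a := a₁) (b := b₁) (k' := c₁) (d' := d₁)
    ht.ne' hp (by rw [hc₂, ha₁, hc₁]; field_simp)
    (by rw [hα₁, hγ₁, hγ₂]; field_simp) X₁ X₂
  have hP := pullback_form (k := c₁) (d := d₁) (a := a₂) (b := b₂) (k' := c₂) (d' := d₂)
    ht.ne' hp (by rw [hc₂, ha₂, hc₁]; field_simp)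
    (by rw [hα₂, hγ₁, hγ₂]; field_simp) P₁ P₂
  rw [hJ, hJ, hG, hG, inner_neg_neg, inner_neg_right, inner_neg_right]
  linear_combination hX + hP
end

section
/- Let V be a real inner product space with dim V = n ≥ 2, let A, c, t, λ, λ₁ be real numbers with A > 0, t > 0, λ > 0, 2c − A²·t·λ² > 0 and λ + 2t·λ₁ > 0, and let p ∈ V with ‖p‖² = 2t. Define the symmetric bilinear form G on V × V by G((X₁,P₁),(X₂,P₂)) = c₁·⟨X₁,X₂⟩ + d₁·⟨p,X₁⟩·⟨p,X₂⟩ + c₂·⟨P₁,P₂⟩ + d₂·⟨p,P₁⟩·⟨p,P₂⟩ with c₁ = A·t·λ², d₁ = (c − A²·t·λ²)/(A·t), c₂ = 1/(A·t), d₂ = −(c − A²·t·(λ² + 2t·λ₁·(λ + t·λ₁)))/(A·t²·(2c − A²·t·λ²)). Then G is positive definite on V × V. -/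
/-!
The horizontal and vertical factors are `G`-orthogonal, and on each factor the form is
`a ⟪x, y⟫ + d ⟪p, x⟫ ⟪p, y⟫`, with eigenvalues `a` on `p`-orthogonal vectors and
`a + d ‖p‖²` along `p`. It is therefore positive definite once both numbers are positive
(`rankOne_pos`). Since `‖p‖² = 2t`, the eigenvalues along `p` are
`c₁ + 2t d₁ = (2c - A²tλ²) / A` and `c₂ + 2t d₂ = A (λ + 2tλ₁)² / (2c - A²tλ²)`.
-/

open RealInnerProductSpace

/-- A scalar multiple of the inner product plus a rank-one term along `p` is positive definite
when its eigenvalues `a` and `a + d ‖p‖²` are positive. -/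
lemma rankOne_pos {V : Type*} [NormedAddCommGroup V] [InnerProductSpace ℝ V]
    (p x : V) (a d : ℝ) (ha : 0 < a) (had : 0 < a + d * ‖p‖ ^ 2) (hx : x ≠ 0) :
    0 < a * ⟪x, x⟫ + d * ⟪p, x⟫ * ⟪p, x⟫ := by
  have hxx : 0 < ‖x‖ ^ 2 := by positivity
  rw [real_inner_self_eq_norm_sq]
  rcases le_or_gt 0 d with hd | hd
  · have h1 := mul_pos ha hxx
    have h2 := mul_nonneg hd (sq_nonneg ⟪p, x⟫)
    nlinarith
  · -- For negative `d`, Cauchy–Schwarz bounds the form below by `(a + d ‖p‖²) ‖x‖²`.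
    have hcs : ⟪p, x⟫ * ⟪p, x⟫ ≤ ‖p‖ ^ 2 * ‖x‖ ^ 2 := by
      have h := real_inner_mul_inner_self_le p x
      rwa [real_inner_self_eq_norm_sq, real_inner_self_eq_norm_sq] at h
    have h1 := mul_le_mul_of_nonpos_left hcs hd.le
    have h2 := mul_pos had hxx
    nlinarith

/-- The Kähler metric `G` of formula (24) is positive definite on `V × V` under the
conditions (23) of the paper. -/
theorem formula24_positive_definite {V : Type*} [NormedAddCommGroup V]
    [InnerProductSpace ℝ V]
    (n : ℕ) (hn : 2 ≤ n) (hdim : Module.finrank ℝ V = n)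
    (A c t lam lam₁ : ℝ) (hA : 0 < A) (ht : 0 < t) (hlam : 0 < lam)
    (hc : 0 < 2 * c - A ^ 2 * t * lam ^ 2) (hden : 0 < lam + 2 * t * lam₁)
    (p : V) (hp : ‖p‖ ^ 2 = 2 * t)
    (c₁ d₁ c₂ d₂ : ℝ)
    (hc₁ : c₁ = A * t * lam ^ 2)
    (hd₁ : d₁ = (c - A ^ 2 * t * lam ^ 2) / (A * t))
    (hc₂ : c₂ = 1 / (A * t))
    (hd₂ : d₂ = -(c - A ^ 2 * t * (lam ^ 2 + 2 * t * lam₁ * (lam + t * lam₁))) /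
      (A * t ^ 2 * (2 * c - A ^ 2 * t * lam ^ 2)))
    (G : V × V → V × V → ℝ)
    (hG : ∀ X₁ P₁ X₂ P₂ : V, G (X₁, P₁) (X₂, P₂) =
      c₁ * ⟪X₁, X₂⟫ + d₁ * ⟪p, X₁⟫ * ⟪p, X₂⟫ +
      c₂ * ⟪P₁, P₂⟫ + d₂ * ⟪p, P₁⟫ * ⟪p, P₂⟫) :
    ∀ z : V × V, z ≠ 0 → 0 < G z z := by
  have hc₁pos : 0 < c₁ := by rw [hc₁]; positivity
  have hc₂pos : 0 < c₂ := by rw [hc₂]; positivity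
  have h₁ : 0 < c₁ + d₁ * ‖p‖ ^ 2 := by
    have e : c₁ + d₁ * ‖p‖ ^ 2 = (2 * c - A ^ 2 * t * lam ^ 2) / A := by
      rw [hp, hc₁, hd₁]
      field_simp
      ring
    rw [e]
    positivity
  have h₂ : 0 < c₂ + d₂ * ‖p‖ ^ 2 := by
    have e : c₂ + d₂ * ‖p‖ ^ 2 =
        A * (lam + 2 * t * lam₁) ^ 2 / (2 * c - A ^ 2 * t * lam ^ 2) := by
      have hne := hc.ne'
      rw [hp, hc₂, hd₂]
      generalize hD : 2 * c - A ^ 2 * t * lam ^ 2 = D at hne ⊢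
      field_simp
      rw [← hD]
      ring
    rw [e]
    positivity
  have form_nonneg : ∀ (a d : ℝ) (x : V), 0 < a → 0 < a + d * ‖p‖ ^ 2 →
      0 ≤ a * ⟪x, x⟫ + d * ⟪p, x⟫ * ⟪p, x⟫ := by
    intro a d x ha had
    rcases eq_or_ne x 0 with rfl | hx
    · simp
    · exact (rankOne_pos p x a d ha had hx).le
  rintro ⟨X, P⟩ hz
  rw [hG]
  by_cases hX : X = 0
  · have hP : P ≠ 0 := by
      rintro rfl
      exact hz (by rw [hX]; rfl)
    linarith [form_nonneg c₁ d₁ X hc₁pos h₁, rankOne_pos p P c₂ d₂ hc₂pos h₂ hP]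
  · linarith [rankOne_pos p X c₁ d₁ hc₁pos h₁ hX, form_nonneg c₂ d₂ P hc₂pos h₂]
end
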